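/- arXiv:0902.4486 — 7 statements merged into one kernel-verified Lean document; each statement's English description precedes it below -/
import Mathlib

section
/- Let n ≥ 2 be an integer and let a_1, …, a_n be real numbers such that a_1 + ⋯ + a_n = 0. Then −((n−2)/√(n(n−1)))·(∑_{i=1}^n a_i²)^{3/2} ≤ ∑_{i=1}^n a_i³ ≤ ((n−2)/√(n(n−1)))·(∑_{i=1}^n a_i²)^{3/2}. -/
theorem okumura_upper (n : ℕ) (hn : 2 ≤ n) (a : Fin n → ℝ)
    (hsum : ∑ i, a i = 0) :
    ∑ i, (a i) ^ 3 ≤ (((n : ℝ) - 2) / Real.sqrt ((n : ℝ) * ((n : ℝ) - 1))) *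
        (∑ i, (a i) ^ 2) ^ ((3 : ℝ) / 2) := by
  have hn' : (2 : ℝ) ≤ n := by exact_mod_cast hn
  have hS : 0 ≤ ∑ i, (a i) ^ 2 := Finset.sum_nonneg fun i _ => sq_nonneg _
  have hpow : (∑ i, (a i) ^ 2) ^ ((3 : ℝ) / 2) = Real.sqrt (∑ i, (a i) ^ 2) ^ 3 := by
    rw [Real.sqrt_eq_rpow, ← Real.rpow_natCast, ← Real.rpow_mul hS]
    norm_num
  have hnn : 0 < (n : ℝ) * ((n : ℝ) - 1) := by nlinarith
  rw [hpow]
  have hs2 := Real.sq_sqrt hS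
  have hs0 := Real.sqrt_nonneg (∑ i, (a i) ^ 2)
  have hr2 := Real.sq_sqrt hnn.le
  have hr0 := Real.sqrt_pos.2 hnn
  set s := Real.sqrt (∑ i, (a i) ^ 2)
  set r := Real.sqrt ((n : ℝ) * ((n : ℝ) - 1))
  have hc0 : 0 ≤ s / r := by positivity
  have hc2 : (s / r) ^ 2 * (n * (n - 1)) = s ^ 2 := by
    rw [← hr2]; field_simp
  have hgoal : ((n : ℝ) - 2) / r * s ^ 3 = (n - 2) * (s / r) * s ^ 2 := by ring
  rw [hgoal]
  set c := s / r
  have hb : ∀ i, a i ≤ (n - 1) * c := by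
    intro i
    have h1 := Finset.add_sum_erase Finset.univ a (Finset.mem_univ i)
    have h2 := Finset.add_sum_erase Finset.univ (fun j => a j ^ 2) (Finset.mem_univ i)
    have h3 := sq_sum_le_card_mul_sum_sq (s := Finset.univ.erase i) (f := a)
    have hcard : ((Finset.univ.erase i).card : ℝ) = n - 1 := by
      rw [Finset.card_erase_of_mem (Finset.mem_univ i), Finset.card_univ, Fintype.card_fin,
        Nat.cast_sub (by omega)]
      simp
    rw [hcard] at h3
    have h4 : ∑ x ∈ Finset.univ.erase i, a x = - a i := by linarith
    have h5 : ∑ x ∈ Finset.univ.erase i, a x ^ 2 = s ^ 2 - a i ^ 2 := by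
      linarith
    rw [h4, h5, ← hc2] at h3
    have h6 : (n : ℝ) * a i ^ 2 ≤ n * ((n - 1) * c) ^ 2 := by nlinarith
    have h7 : a i ^ 2 ≤ ((n - 1) * c) ^ 2 := le_of_mul_le_mul_left h6 (by linarith)
    exact (abs_le_of_sq_le_sq' h7 (mul_nonneg (by linarith) hc0)).2
  have key : 0 ≤ ∑ i, ((n - 1) * c - a i) * (a i + c) ^ 2 :=
    Finset.sum_nonneg fun i _ => mul_nonneg (sub_nonneg.2 (hb i)) (sq_nonneg _)
  have hexp : ∑ i, ((n - 1) * c - a i) * (a i + c) ^ 2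
      = - ∑ i, a i ^ 3 + ((n - 1) * c - 2 * c) * ∑ i, a i ^ 2
        + (2 * ((n - 1) * c) * c - c ^ 2) * ∑ i, a i + n * ((n - 1) * c * c ^ 2) := by
    have : (n : ℝ) * ((n - 1) * c * c ^ 2) = ∑ i : Fin n, ((n - 1) * c * c ^ 2) := by simp
    rw [this, Finset.mul_sum, Finset.mul_sum, ← Finset.sum_neg_distrib, ← Finset.sum_add_distrib,
      ← Finset.sum_add_distrib, ← Finset.sum_add_distrib]
    exact Finset.sum_congr rfl fun i _ => by ring
  rw [hexp, hsum, ← hs2] at key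
  have : (n : ℝ) * ((n - 1) * c * c ^ 2) = c * s ^ 2 := by rw [← hc2]; ring
  rw [this] at key
  linarith


/-- Okumura's lemma: if `a₁ + ⋯ + aₙ = 0` then
`-((n-2)/√(n(n-1))) (∑ aᵢ²)^{3/2} ≤ ∑ aᵢ³ ≤ ((n-2)/√(n(n-1))) (∑ aᵢ²)^{3/2}`. -/
theorem okumura_lemma (n : ℕ) (hn : 2 ≤ n) (a : Fin n → ℝ)
    (hsum : ∑ i, a i = 0) :
    -(((n : ℝ) - 2) / Real.sqrt ((n : ℝ) * ((n : ℝ) - 1))) *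
        (∑ i, (a i) ^ 2) ^ ((3 : ℝ) / 2) ≤ ∑ i, (a i) ^ 3 ∧
    ∑ i, (a i) ^ 3 ≤ (((n : ℝ) - 2) / Real.sqrt ((n : ℝ) * ((n : ℝ) - 1))) *
        (∑ i, (a i) ^ 2) ^ ((3 : ℝ) / 2) := by
  refine ⟨?_, okumura_upper n hn a hsum⟩
  have h := okumura_upper n hn (fun i => - a i) (by simp [hsum])
  have h3 : ∀ i, (- a i) ^ 3 = - a i ^ 3 := fun i => by ring
  simp only [neg_sq, h3, Finset.sum_neg_distrib] at h
  linarith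
end

section
/- Let n ≥ 2 be an integer and let a_1, …, a_n be real numbers with a_1 + ⋯ + a_n = 0. Then ∑_{i=1}^n a_i³ = ((n−2)/√(n(n−1)))·(∑_{i=1}^n a_i²)^{3/2} holds if and only if n−1 of the a_i are nonpositive and mutually equal; and ∑_{i=1}^n a_i³ = −((n−2)/√(n(n−1)))·(∑_{i=1}^n a_i²)^{3/2} holds if and only if n−1 of the a_i are nonnegative and mutually equal. -/
theorem okumura_upper_aux (n : ℕ) (hn : 2 ≤ n) (a : Fin n → ℝ)
    (hsum : ∑ i, a i = 0) :
    ((∑ i, (a i) ^ 3 = (((n : ℝ) - 2) / Real.sqrt ((n : ℝ) * ((n : ℝ) - 1))) *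
        (∑ i, (a i) ^ 2) ^ ((3 : ℝ) / 2)) ↔
      (∃ S : Finset (Fin n), S.card = n - 1 ∧ (∀ i ∈ S, a i ≤ 0) ∧
        (∀ i ∈ S, ∀ j ∈ S, a i = a j))) := by
  have hn2 : (2 : ℝ) ≤ n := by exact_mod_cast hn
  have hNpos : 0 < (n : ℝ) * ((n : ℝ) - 1) := by nlinarith
  have hq : 0 ≤ ∑ i, (a i) ^ 2 := Finset.sum_nonneg fun i _ => sq_nonneg _
  obtain ⟨k, hk0, hk⟩ : ∃ k : ℝ, 0 ≤ k ∧ ∑ i, (a i) ^ 2 = (n : ℝ) * ((n : ℝ) - 1) * k ^ 2 := by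
    refine ⟨Real.sqrt ((∑ i, (a i) ^ 2) / ((n : ℝ) * ((n : ℝ) - 1))), Real.sqrt_nonneg _, ?_⟩
    rw [Real.sq_sqrt (by positivity)]
    exact (mul_div_cancel₀ _ hNpos.ne').symm
  have hrhs : (((n : ℝ) - 2) / Real.sqrt ((n : ℝ) * ((n : ℝ) - 1))) *
        (∑ i, (a i) ^ 2) ^ ((3 : ℝ) / 2) = (n - 2) * (n * (n - 1)) * k ^ 3 := by
    rw [hk]
    generalize (n : ℝ) * ((n : ℝ) - 1) = N at hNpos
    have hs := Real.sqrt_pos.2 hNpos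
    have hs2 := Real.sq_sqrt hNpos.le
    have h1 : (N * k ^ 2) = (Real.sqrt N * k) ^ (2 : ℝ) := by
      rw [Real.rpow_two, mul_pow, hs2]
    rw [h1, ← Real.rpow_mul (by positivity)]
    have h2 : (2 : ℝ) * (3 / 2) = (3 : ℕ) := by norm_num
    rw [h2, Real.rpow_natCast]
    field_simp
    rw [hs2]
    ring
  rw [hrhs]
  have hexp : ∑ i, (a i + k) ^ 2 * ((n - 1) * k - a i) =
      (n - 2) * (n * (n - 1)) * k ^ 3 - ∑ i, (a i) ^ 3 := by
    have h1 : ∀ i, (a i + k) ^ 2 * ((n - 1) * k - a i) =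
        (n - 1) * k ^ 3 + (2 * (n - 1) * k ^ 2 - k ^ 2) * a i + ((n - 3) * k) * (a i) ^ 2
          - (a i) ^ 3 := fun i => by ring
    simp only [h1, Finset.sum_sub_distrib, Finset.sum_add_distrib, ← Finset.mul_sum, hsum, hk]
    simp
    ring
  have herase : ∀ i, ∑ j ∈ Finset.univ.erase i, a j = - a i := fun i => by
    have := Finset.add_sum_erase Finset.univ a (Finset.mem_univ i)
    linarith
  have hcard : ∀ i : Fin n, (((Finset.univ.erase i).card : ℕ) : ℝ) = n - 1 := fun i => by
    rw [Finset.card_erase_of_mem (Finset.mem_univ i), Finset.card_univ, Fintype.card_fin,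
      Nat.cast_sub (by omega)]
    simp
  have hle : ∀ i, a i ≤ (n - 1) * k := fun i => by
    have hcs := sq_sum_le_card_mul_sum_sq (s := Finset.univ.erase i) (f := a)
    have h2 := Finset.add_sum_erase Finset.univ (fun j => a j ^ 2) (Finset.mem_univ i)
    rw [herase, hcard] at hcs
    have h3 : ∑ j ∈ Finset.univ.erase i, a j ^ 2 = n * (n - 1) * k ^ 2 - a i ^ 2 := by linarith
    rw [h3] at hcs
    have h4 : (n : ℝ) * (a i ^ 2) ≤ n * (((n - 1) * k) ^ 2) := by nlinarith
    have h5 := le_of_mul_le_mul_left h4 (by linarith)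
    exact le_of_sq_le_sq h5 (by nlinarith)
  constructor
  · intro h
    rw [h, sub_self, Finset.sum_eq_zero_iff_of_nonneg
      (fun i _ => mul_nonneg (sq_nonneg _) (sub_nonneg.2 (hle i)))] at hexp
    have hor : ∀ i, a i = -k ∨ a i = (n - 1) * k := fun i => by
      rcases mul_eq_zero.1 (hexp i (Finset.mem_univ i)) with h | h
      · left
        have := pow_eq_zero_iff (two_ne_zero) |>.1 h
        linarith
      · right; linarith
    have hex : ∃ i, a i = (n - 1) * k := by
      by_contra! hne
      have hall : ∀ i, a i = -k := fun i => (hor i).resolve_right (hne i)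
      have : k = 0 := by
        simp [hall] at hsum
        rcases hsum with h | h
        · omega
        · exact h
      exact hne ⟨0, by omega⟩ (by rw [hall, this]; simp)
    obtain ⟨i0, hi0⟩ := hex
    have hge : ∀ i, 0 ≤ a i + k := fun i => by
      rcases hor i with h | h
      · rw [h]; simp
      · rw [h]; nlinarith
    have hz : ∑ j ∈ Finset.univ.erase i0, (a j + k) = 0 := by
      rw [Finset.sum_add_distrib, herase, Finset.sum_const, nsmul_eq_mul, hcard, hi0]
      ring
    rw [Finset.sum_eq_zero_iff_of_nonneg (fun i _ => hge i)] at hz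
    refine ⟨Finset.univ.erase i0, ?_, fun i hi => ?_, fun i hi j hj => ?_⟩
    · simp
    · linarith [hz i hi]
    · linarith [hz i hi, hz j hj]
  · rintro ⟨S, hS, hneg, heq⟩
    obtain ⟨i0, hi0⟩ : ∃ i0, Sᶜ = {i0} := by
      rw [← Finset.card_eq_one, Finset.card_compl, hS, Fintype.card_fin]
      omega
    have hSe : S = Finset.univ.erase i0 := by
      rw [← compl_compl S, hi0]
      ext; simp
    obtain ⟨j0, hj0⟩ : S.Nonempty := Finset.card_pos.1 (by omega)
    have hc : ∀ i ∈ Finset.univ.erase i0, a i = a j0 := fun i hi => heq i (hSe ▸ hi) j0 hj0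
    have hc0 := hneg j0 hj0
    have ha0 : a i0 = -((n - 1) * a j0) := by
      have := herase i0
      rw [Finset.sum_congr rfl hc, Finset.sum_const, nsmul_eq_mul, hcard] at this
      linarith
    have hkc : k = - a j0 := by
      have h2 := Finset.add_sum_erase Finset.univ (fun j => a j ^ 2) (Finset.mem_univ i0)
      have h5 : ∑ j ∈ Finset.univ.erase i0, a j ^ 2 = ∑ j ∈ Finset.univ.erase i0, a j0 ^ 2 :=
        Finset.sum_congr rfl fun i hi => by rw [hc i hi]
      rw [h5, Finset.sum_const, nsmul_eq_mul,
        hcard, hk, ha0] at h2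
      have h3 : (n : ℝ) * (n - 1) * (- a j0) ^ 2 = n * (n - 1) * k ^ 2 := by
        rw [← h2]; ring
      have h4 := mul_left_cancel₀ hNpos.ne' h3
      exact ((pow_left_inj₀ (by linarith) hk0 two_ne_zero).1 h4).symm
    have hz : ∑ i, (a i + k) ^ 2 * ((n - 1) * k - a i) = 0 := by
      refine Finset.sum_eq_zero fun i _ => ?_
      by_cases hi : i = i0
      · rw [hi, ha0, hkc]; ring
      · rw [hc i (by simp [hi]), hkc]; ring
    linarith

/-- Equality characterization in Okumura's lemma: for real numbers `a₁, …, aₙ` with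
`∑ aᵢ = 0`, the upper equality `∑ aᵢ³ = ((n-2)/√(n(n-1))) (∑ aᵢ²)^{3/2}` holds iff
`n-1` of the `aᵢ` are nonpositive and mutually equal, and the lower equality holds iff
`n-1` of the `aᵢ` are nonnegative and mutually equal. -/
theorem okumura_lemma_equality (n : ℕ) (hn : 2 ≤ n) (a : Fin n → ℝ)
    (hsum : ∑ i, a i = 0) :
    ((∑ i, (a i) ^ 3 = (((n : ℝ) - 2) / Real.sqrt ((n : ℝ) * ((n : ℝ) - 1))) *
        (∑ i, (a i) ^ 2) ^ ((3 : ℝ) / 2)) ↔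
      (∃ S : Finset (Fin n), S.card = n - 1 ∧ (∀ i ∈ S, a i ≤ 0) ∧
        (∀ i ∈ S, ∀ j ∈ S, a i = a j))) ∧
    ((∑ i, (a i) ^ 3 = -((((n : ℝ) - 2) / Real.sqrt ((n : ℝ) * ((n : ℝ) - 1))) *
        (∑ i, (a i) ^ 2) ^ ((3 : ℝ) / 2))) ↔
      (∃ S : Finset (Fin n), S.card = n - 1 ∧ (∀ i ∈ S, 0 ≤ a i) ∧
        (∀ i ∈ S, ∀ j ∈ S, a i = a j))) := by
  refine ⟨okumura_upper_aux n hn a hsum, ?_⟩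
  have h := okumura_upper_aux n hn (fun i => - a i) (by simp [hsum])
  have h3 : ∑ i, (- a i) ^ 3 = - ∑ i, (a i) ^ 3 := by
    rw [← Finset.sum_neg_distrib]
    exact Finset.sum_congr rfl fun i _ => by ring
  simp only [h3, neg_sq, neg_nonpos, neg_inj] at h
  rw [← h]
  exact eq_neg_iff_add_eq_zero.trans ⟨fun h => by linarith, fun h => by linarith⟩
end

section
/- Let n ≥ 2 be an integer, H, c real numbers, and a_1, …, a_n real numbers with a_1 + ⋯ + a_n = 0. Put Q := ∑_{i=1}^n a_i². Then n·H·(∑_{i=1}^n a_i³) − Q·(Q − n(c+H²)) ≥ −Q·P_H(√Q), where P_H(x) := x² + (n(n−2)/√(n(n−1)))·|H|·x − n(c+H²). -/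
/-- The polynomial `P_H(x) = x² + (n(n-2)/√(n(n-1)))|H|x - n(c+H²)`. -/
noncomputable def P (n : ℕ) (H c x : ℝ) : ℝ :=
  x ^ 2 + ((n : ℝ) * ((n : ℝ) - 2) / Real.sqrt ((n : ℝ) * ((n : ℝ) - 1))) * |H| * x
    - (n : ℝ) * (c + H ^ 2)

lemma okumura_aux (n : ℕ) (hn : 2 ≤ n) (a : Fin n → ℝ) (hsum : ∑ i, a i = 0) :
    ∑ i, (a i) ^ 3 ≤ ((n : ℝ) - 2) / Real.sqrt ((n : ℝ) * ((n : ℝ) - 1)) *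
      Real.sqrt (∑ i, (a i) ^ 2) * (∑ i, (a i) ^ 2) := by
  have hn' : (2 : ℝ) ≤ n := by exact_mod_cast hn
  have hQ : 0 ≤ ∑ i, (a i) ^ 2 := Finset.sum_nonneg fun i _ => sq_nonneg _
  have hpos : 0 < (n : ℝ) * ((n : ℝ) - 1) := by nlinarith
  have hw : 0 < Real.sqrt ((n : ℝ) * ((n : ℝ) - 1)) := Real.sqrt_pos.mpr hpos
  have hw2 : Real.sqrt ((n : ℝ) * ((n : ℝ) - 1)) ^ 2 = (n : ℝ) * ((n : ℝ) - 1) :=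
    Real.sq_sqrt hpos.le
  have hs : 0 ≤ Real.sqrt (∑ i, (a i) ^ 2) := Real.sqrt_nonneg _
  have hs2 : Real.sqrt (∑ i, (a i) ^ 2) ^ 2 = ∑ i, (a i) ^ 2 := Real.sq_sqrt hQ
  have hb : ∀ i, (n : ℝ) * (a i) ^ 2 ≤ ((n : ℝ) - 1) * ∑ j, (a j) ^ 2 := by
    intro i
    have h1 := sq_sum_le_card_mul_sum_sq (s := Finset.univ.erase i) (f := a)
    have h2 := Finset.add_sum_erase Finset.univ a (Finset.mem_univ i)
    have h3 := Finset.add_sum_erase Finset.univ (fun j => (a j) ^ 2) (Finset.mem_univ i)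
    have h4 : (((Finset.univ.erase i).card : ℕ) : ℝ) = (n : ℝ) - 1 := by
      rw [Finset.card_erase_of_mem (Finset.mem_univ i), Finset.card_univ, Fintype.card_fin,
        Nat.cast_sub (by omega), Nat.cast_one]
    rw [h4] at h1
    rw [hsum] at h2
    have h5 : ∑ x ∈ Finset.univ.erase i, a x = - a i := by linarith
    have h6 : ∑ x ∈ Finset.univ.erase i, (a x) ^ 2 = (∑ j, (a j) ^ 2) - (a i) ^ 2 := by linarith
    rw [h5, h6] at h1
    nlinarith
  generalize Real.sqrt (∑ i, (a i) ^ 2) = s at *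
  generalize Real.sqrt ((n : ℝ) * ((n : ℝ) - 1)) = w at *
  have hM : ∀ i, a i ≤ ((n : ℝ) - 1) * s / w := by
    intro i
    rw [le_div_iff₀ hw]
    refine abs_le_of_sq_le_sq' ?_ ?_ |>.2
    · have := mul_le_mul_of_nonneg_left (hb i) (by linarith : (0 : ℝ) ≤ (n : ℝ) - 1)
      rw [mul_pow, mul_pow, hw2, hs2]
      nlinarith
    · exact mul_nonneg (by linarith) hs
  have hle : ∑ i, (a i - ((n : ℝ) - 1) * s / w) * (a i + s / w) ^ 2 ≤ 0 :=
    Finset.sum_nonpos fun i _ =>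
      mul_nonpos_of_nonpos_of_nonneg (by linarith [hM i]) (sq_nonneg _)
  have hexp : ∀ M t : ℝ, ∑ i, (a i - M) * (a i + t) ^ 2 =
      ∑ i, (a i) ^ 3 + (2 * t - M) * ∑ i, (a i) ^ 2 - n * (M * t ^ 2) := by
    intro M t
    have : ∀ i, (a i - M) * (a i + t) ^ 2 = (a i) ^ 3 + (2 * t - M) * (a i) ^ 2
        + (t ^ 2 - 2 * M * t) * a i - M * t ^ 2 := fun i => by ring
    simp only [this, Finset.sum_sub_distrib, Finset.sum_add_distrib, ← Finset.mul_sum, hsum]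
    simp
    ring
  rw [hexp, ← hs2] at hle
  rw [← hs2]
  have hk : (n : ℝ) * (((n : ℝ) - 1) * s / w * (s / w) ^ 2) = s ^ 3 / w := by
    have : (n : ℝ) * (((n : ℝ) - 1) * s / w * (s / w) ^ 2)
      = ((n : ℝ) * ((n : ℝ) - 1)) * s ^ 3 / w ^ 3 := by field_simp
    rw [this, ← hw2]
    field_simp
  rw [hk] at hle
  have he : ((n : ℝ) - 2) / w * s * s ^ 2 =
      s ^ 3 / w - (2 * (s / w) - ((n : ℝ) - 1) * s / w) * s ^ 2 := by
    field_simp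
    ring
  rw [he]
  linarith

/-- The algebraic core of inequality (4.5): for `a₁ + ⋯ + aₙ = 0` and `Q = ∑ aᵢ²`,
`nH ∑ aᵢ³ - Q(Q - n(c+H²)) ≥ -Q P_H(√Q)`. -/
theorem simons_rhs_bound (n : ℕ) (hn : 2 ≤ n) (H c : ℝ) (a : Fin n → ℝ)
    (hsum : ∑ i, a i = 0) :
    (n : ℝ) * H * (∑ i, (a i) ^ 3) -
        (∑ i, (a i) ^ 2) * ((∑ i, (a i) ^ 2) - (n : ℝ) * (c + H ^ 2)) ≥
      -(∑ i, (a i) ^ 2) * P n H c (Real.sqrt (∑ i, (a i) ^ 2)) := by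
  have h1 := okumura_aux n hn a hsum
  have h2 := okumura_aux n hn (fun i => - a i) (by simp [hsum])
  have hc : ∀ x : ℝ, (-x) ^ 3 = -x ^ 3 := fun x => by ring
  simp only [hc, neg_sq, Finset.sum_neg_distrib] at h2
  have hQ : 0 ≤ ∑ i, (a i) ^ 2 := Finset.sum_nonneg fun i _ => sq_nonneg _
  have hs2 := Real.sq_sqrt hQ
  have h3 := mul_le_mul_of_nonneg_left (abs_le'.mpr ⟨h1, h2⟩)
    (mul_nonneg (Nat.cast_nonneg (α := ℝ) n) (abs_nonneg H))
  have h4 : -((n : ℝ) * |H| * |∑ i, (a i) ^ 3|) ≤ (n : ℝ) * H * ∑ i, (a i) ^ 3 := by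
    have := neg_abs_le ((n : ℝ) * H * ∑ i, (a i) ^ 3)
    rwa [abs_mul, abs_mul, Nat.abs_cast] at this
  unfold P
  rw [hs2]
  refine ge_iff_le.mpr (le_trans (le_of_eq ?_) (sub_le_sub_right ((neg_le_neg h3).trans h4) _))
  ring
end

section
/- Let n ≥ 3 be an integer, 0 < r < 1, H := (nr² − (n−1))/(nr√(1−r²)), and Φ₀ := √(n−1)/(r·√(n(1−r²))). Set α_H := (√n/(2√(n−1)))·(√(n²H² + 4(n−1)) − (n−2)|H|). If r² ≤ (n−1)/n then Φ₀ = α_H; if r² > (n−1)/n then Φ₀ = (√n/(2√(n−1)))·(√(n²H² + 4(n−1)) + (n−2)|H|) > α_H. -/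
/-- For the torus `S¹(√(1-r²)) × S^{n-1}(r) ⊂ S^{n+1}` with mean curvature
`H = (nr² - (n-1))/(nr√(1-r²))` and `|Φ| = Φ₀ = √(n-1)/(r√(n(1-r²)))`, setting
`α_H = (√n/(2√(n-1)))(√(n²H² + 4(n-1)) - (n-2)|H|)`: if `r² ≤ (n-1)/n` then
`Φ₀ = α_H`, and if `r² > (n-1)/n` then
`Φ₀ = (√n/(2√(n-1)))(√(n²H² + 4(n-1)) + (n-2)|H|) > α_H`. -/
theorem sphere_torus_phi_vs_alpha (n : ℕ) (hn : 3 ≤ n) (r : ℝ) (hr0 : 0 < r)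
    (hr1 : r < 1) (H Φ₀ αH : ℝ)
    (hH : H = ((n : ℝ) * r ^ 2 - ((n : ℝ) - 1)) / ((n : ℝ) * r * Real.sqrt (1 - r ^ 2)))
    (hΦ₀ : Φ₀ = Real.sqrt ((n : ℝ) - 1) / (r * Real.sqrt ((n : ℝ) * (1 - r ^ 2))))
    (hα : αH = (Real.sqrt (n : ℝ) / (2 * Real.sqrt ((n : ℝ) - 1))) *
      (Real.sqrt ((n : ℝ) ^ 2 * H ^ 2 + 4 * ((n : ℝ) - 1)) - ((n : ℝ) - 2) * |H|)) :
    (r ^ 2 ≤ ((n : ℝ) - 1) / (n : ℝ) → Φ₀ = αH) ∧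
    (r ^ 2 > ((n : ℝ) - 1) / (n : ℝ) →
      Φ₀ = (Real.sqrt (n : ℝ) / (2 * Real.sqrt ((n : ℝ) - 1))) *
          (Real.sqrt ((n : ℝ) ^ 2 * H ^ 2 + 4 * ((n : ℝ) - 1)) + ((n : ℝ) - 2) * |H|) ∧
        Φ₀ > αH) := by
  have hn3 : (3 : ℝ) ≤ n := by exact_mod_cast hn
  have hn0 : (0 : ℝ) < n := by linarith
  have hr2 : r ^ 2 < 1 := by nlinarith
  have hs2 : Real.sqrt (1 - r ^ 2) ^ 2 = 1 - r ^ 2 := Real.sq_sqrt (by linarith)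
  have hs0 : 0 < Real.sqrt (1 - r ^ 2) := Real.sqrt_pos.mpr (by linarith)
  rw [Real.sqrt_mul hn0.le] at hΦ₀
  set s := Real.sqrt (1 - r ^ 2) with hs
  have ha2 : Real.sqrt (n : ℝ) ^ 2 = n := Real.sq_sqrt hn0.le
  have ha0 : 0 < Real.sqrt (n : ℝ) := Real.sqrt_pos.mpr hn0
  have hb2 : Real.sqrt ((n : ℝ) - 1) ^ 2 = n - 1 := Real.sq_sqrt (by linarith)
  have hb0 : 0 < Real.sqrt ((n : ℝ) - 1) := Real.sqrt_pos.mpr (by linarith)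
  have hS : Real.sqrt ((n : ℝ) ^ 2 * H ^ 2 + 4 * ((n : ℝ) - 1))
      = (((n : ℝ) - 1) - (n - 2) * r ^ 2) / (r * s) := by
    have hnn : 0 ≤ (((n : ℝ) - 1) - (n - 2) * r ^ 2) / (r * s) := by
      apply div_nonneg _ (by positivity)
      nlinarith
    rw [← Real.sqrt_sq hnn]
    congr 1
    rw [hH]
    field_simp
    rw [hs2]
    ring
  have hsum : Real.sqrt ((n : ℝ) ^ 2 * H ^ 2 + 4 * ((n : ℝ) - 1)) + ((n : ℝ) - 2) * H
      = 2 * ((n : ℝ) - 1) / (n * r * s) := by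
    rw [hS, hH]
    field_simp
    ring
  have hmain : Φ₀ = (Real.sqrt (n : ℝ) / (2 * Real.sqrt ((n : ℝ) - 1))) *
      (Real.sqrt ((n : ℝ) ^ 2 * H ^ 2 + 4 * ((n : ℝ) - 1)) + ((n : ℝ) - 2) * H) := by
    rw [hsum, hΦ₀]
    generalize Real.sqrt (n : ℝ) = a at *
    generalize Real.sqrt ((n : ℝ) - 1) = b at *
    rw [← hb2, ← ha2]
    field_simp
  constructor
  · intro h
    rw [le_div_iff₀ hn0] at h
    have hH0 : H ≤ 0 := by
      rw [hH]
      exact div_nonpos_of_nonpos_of_nonneg (by linarith) (by positivity)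
    rw [hα, abs_of_nonpos hH0, hmain]
    ring
  · intro h
    rw [gt_iff_lt, div_lt_iff₀ hn0] at h
    have hH0 : 0 < H := by
      rw [hH]
      exact div_pos (by linarith) (by positivity)
    rw [hα, abs_of_pos hH0]
    refine ⟨hmain, ?_⟩
    rw [hmain, gt_iff_lt]
    apply mul_lt_mul_of_pos_left _ (by positivity)
    nlinarith
end

section
/- Let n ≥ 3 be an integer and r > 0, and set H := (nr² + 1)/(nr√(1+r²)). Then H > 1 if and only if r < 1/√(n(n−2)). Moreover, if H > 1 then √(n−1)/(r·√(n(1+r²))) = (√n/(2√(n−1)))·((n−2)H + √(n²H² − 4(n−1))) > α_H, where α_H := (√n/(2√(n−1)))·(√(n²H² − 4(n−1)) − (n−2)H). -/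
/-- For the hyperbolic cylinder `H^{n-1}(-√(1+r²)) × S¹(r) ⊂ H^{n+1}` with mean
curvature `H = (nr² + 1)/(nr√(1+r²))`: `H > 1` iff `r < 1/√(n(n-2))`; and if `H > 1`
then `|Φ| = √(n-1)/(r√(n(1+r²))) = (√n/(2√(n-1)))((n-2)H + √(n²H² - 4(n-1))) > α_H`,
where `α_H = (√n/(2√(n-1)))(√(n²H² - 4(n-1)) - (n-2)H)`. -/
theorem hyperbolic_cylinder_k1 (n : ℕ) (hn : 3 ≤ n) (r : ℝ) (hr : 0 < r) (H αH : ℝ)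
    (hH : H = ((n : ℝ) * r ^ 2 + 1) / ((n : ℝ) * r * Real.sqrt (1 + r ^ 2)))
    (hα : αH = (Real.sqrt (n : ℝ) / (2 * Real.sqrt ((n : ℝ) - 1))) *
      (Real.sqrt ((n : ℝ) ^ 2 * H ^ 2 - 4 * ((n : ℝ) - 1)) - ((n : ℝ) - 2) * H)) :
    (H > 1 ↔ r < 1 / Real.sqrt ((n : ℝ) * ((n : ℝ) - 2))) ∧
    (H > 1 →
      Real.sqrt ((n : ℝ) - 1) / (r * Real.sqrt ((n : ℝ) * (1 + r ^ 2))) =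
        (Real.sqrt (n : ℝ) / (2 * Real.sqrt ((n : ℝ) - 1))) *
          (((n : ℝ) - 2) * H + Real.sqrt ((n : ℝ) ^ 2 * H ^ 2 - 4 * ((n : ℝ) - 1))) ∧
      (Real.sqrt (n : ℝ) / (2 * Real.sqrt ((n : ℝ) - 1))) *
          (((n : ℝ) - 2) * H + Real.sqrt ((n : ℝ) ^ 2 * H ^ 2 - 4 * ((n : ℝ) - 1))) >
        αH) := by
  have hx : (3 : ℝ) ≤ (n : ℝ) := by exact_mod_cast hn
  generalize (n : ℝ) = x at *
  have hs : 0 < Real.sqrt (1 + r ^ 2) := Real.sqrt_pos.mpr (by positivity)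
  have hs2 : Real.sqrt (1 + r ^ 2) ^ 2 = 1 + r ^ 2 := Real.sq_sqrt (by positivity)
  have hmul : Real.sqrt (x * (1 + r ^ 2)) = Real.sqrt x * Real.sqrt (1 + r ^ 2) :=
    Real.sqrt_mul (by linarith) _
  rw [hmul]
  generalize Real.sqrt (1 + r ^ 2) = s at *
  have hx0 : 0 < x := by linarith
  have hxx : 0 < x * (x - 2) := mul_pos hx0 (by linarith)
  have key : H > 1 ↔ r ^ 2 * (x * (x - 2)) < 1 := by
    rw [hH, gt_iff_lt, one_lt_div (by positivity),
      ← sq_lt_sq₀ (by positivity) (by positivity)]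
    have e : (x * r ^ 2 + 1) ^ 2 - (x * r * s) ^ 2 = 1 - r ^ 2 * (x * (x - 2)) := by
      rw [mul_pow _ s, hs2]; ring
    constructor <;> intro h <;> linarith
  refine ⟨?_, ?_⟩
  · have ht : 0 < Real.sqrt (x * (x - 2)) := Real.sqrt_pos.mpr hxx
    rw [key, lt_div_iff₀ ht, ← sq_lt_sq₀ (a := r * _) (by positivity) (by norm_num), mul_pow,
      Real.sq_sqrt hxx.le, one_pow]
  · intro h1
    have h2 := key.mp h1
    have h3 : 0 < 1 - (x - 2) * r ^ 2 := by
      have : 0 ≤ r ^ 2 * (x - 2) := mul_nonneg (by positivity) (by linarith)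
      nlinarith
    have hsq : x ^ 2 * H ^ 2 - 4 * (x - 1) = ((1 - (x - 2) * r ^ 2) / (r * s)) ^ 2 := by
      rw [hH, div_pow, div_pow, mul_pow, mul_pow, mul_pow, hs2]
      field_simp
      ring
    have ha : 0 < Real.sqrt x := Real.sqrt_pos.mpr hx0
    have hb : 0 < Real.sqrt (x - 1) := Real.sqrt_pos.mpr (by linarith)
    have ha2 : Real.sqrt x ^ 2 = x := Real.sq_sqrt hx0.le
    have hb2 : Real.sqrt (x - 1) ^ 2 = x - 1 := Real.sq_sqrt (by linarith)
    constructor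
    · have e : (x - 2) * H + Real.sqrt (x ^ 2 * H ^ 2 - 4 * (x - 1))
          = 2 * (x - 1) / (x * r * s) := by
        rw [hsq, Real.sqrt_sq (by positivity), hH]
        field_simp
        ring
      rw [e]
      generalize Real.sqrt (x - 1) = b at *
      generalize Real.sqrt x = a at *
      rw [← hb2, ← ha2]
      field_simp
    · rw [hα, gt_iff_lt]
      apply mul_lt_mul_of_pos_left _ (by positivity)
      have : 0 < (x - 2) * H := mul_pos (by linarith) (by linarith)
      linarith
end

section
/- Let n ≥ 3 be an integer and r > 0, and set H := (nr² + (n−1))/(nr√(1+r²)). Then H > 1, and √(n−1)/(r·√(n(1+r²))) = (√n/(2√(n−1)))·(√(n²H² − 4(n−1)) − (n−2)H). -/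
/-- For the hyperbolic cylinder `H¹(-√(1+r²)) × S^{n-1}(r) ⊂ H^{n+1}` with mean
curvature `H = (nr² + (n-1))/(nr√(1+r²))`: `H > 1`, and
`|Φ| = √(n-1)/(r√(n(1+r²))) = (√n/(2√(n-1)))(√(n²H² - 4(n-1)) - (n-2)H)`. -/
theorem hyperbolic_cylinder_k_n_minus_one (n : ℕ) (hn : 3 ≤ n) (r : ℝ) (hr : 0 < r)
    (H : ℝ)
    (hH : H = ((n : ℝ) * r ^ 2 + ((n : ℝ) - 1)) / ((n : ℝ) * r * Real.sqrt (1 + r ^ 2))) :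
    H > 1 ∧
    Real.sqrt ((n : ℝ) - 1) / (r * Real.sqrt ((n : ℝ) * (1 + r ^ 2))) =
      (Real.sqrt (n : ℝ) / (2 * Real.sqrt ((n : ℝ) - 1))) *
        (Real.sqrt ((n : ℝ) ^ 2 * H ^ 2 - 4 * ((n : ℝ) - 1)) - ((n : ℝ) - 2) * H) := by
  have hn' : (3 : ℝ) ≤ n := by exact_mod_cast hn
  generalize (n : ℝ) = m at *
  have hs : 0 < Real.sqrt (1 + r ^ 2) := Real.sqrt_pos.mpr (by positivity)
  have hs2 : Real.sqrt (1 + r ^ 2) ^ 2 = 1 + r ^ 2 := Real.sq_sqrt (by positivity)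
  rw [Real.sqrt_mul (by linarith : (0 : ℝ) ≤ m)]
  generalize Real.sqrt (1 + r ^ 2) = s at *
  have hm : 0 < m := by linarith
  have hm1 : 0 < m - 1 := by linarith
  have hm2 : 0 < m - 2 := by linarith
  have ha : 0 < Real.sqrt m := Real.sqrt_pos.mpr hm
  have ha2 : Real.sqrt m ^ 2 = m := Real.sq_sqrt hm.le
  have hb : 0 < Real.sqrt (m - 1) := Real.sqrt_pos.mpr hm1
  have hb2 : Real.sqrt (m - 1) ^ 2 = m - 1 := Real.sq_sqrt hm1.le
  have hr2 : 0 < r ^ 2 := by positivity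
  constructor
  · rw [hH, gt_iff_lt, one_lt_div (by positivity)]
    apply lt_of_pow_lt_pow_left₀ 2 (by positivity)
    have e : (m * r * s) ^ 2 = m ^ 2 * r ^ 2 * (1 + r ^ 2) := by rw [← hs2]; ring
    rw [e]
    have h1 : 0 < m * (m - 2) * r ^ 2 := by positivity
    have h2 : 0 < (m - 1) ^ 2 := by positivity
    nlinarith
  · have key : m ^ 2 * H ^ 2 - 4 * (m - 1) = (((m - 2) * r ^ 2 + (m - 1)) / (r * s)) ^ 2 := by
      rw [hH]
      field_simp
      rw [hs2]
      ring
    rw [key, Real.sqrt_sq (by positivity)]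
    have k2 : ((m - 2) * r ^ 2 + (m - 1)) / (r * s) - (m - 2) * H
        = 2 * (m - 1) / (m * (r * s)) := by
      rw [hH]
      field_simp
      ring
    rw [k2]
    generalize Real.sqrt m = a at *
    generalize Real.sqrt (m - 1) = b at *
    rw [← hb2, ← ha2]
    field_simp
end

section
/- Let H ≠ 0 be a real number and 0 < B < 1, and define K_B(s) := 4H²·B·(B + sin(2Hs))·(1 + B·sin(2Hs))/(1 + B² + 2B·sin(2Hs))² for s ∈ ℝ. Then inf_{s∈ℝ} K_B(s) = −4H²B/(1−B)², and this infimum is attained (at every s with sin(2Hs) = −1). -/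
/-- The Gaussian curvature
`K_B(s) = 4H²B(B + sin(2Hs))(1 + B sin(2Hs))/(1 + B² + 2B sin(2Hs))²` of the Delaunay
unduloid has infimum `-4H²B/(1-B)²` over `s ∈ ℝ`, attained at every `s` with
`sin(2Hs) = -1` (and such `s` exist). -/
theorem unduloid_inf_curvature (H B : ℝ) (hH : H ≠ 0) (hB0 : 0 < B) (hB1 : B < 1)
    (KB : ℝ → ℝ)
    (hK : ∀ s, KB s =
      4 * H ^ 2 * B * (B + Real.sin (2 * H * s)) * (1 + B * Real.sin (2 * H * s)) /
        (1 + B ^ 2 + 2 * B * Real.sin (2 * H * s)) ^ 2) :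
    IsGLB (Set.range KB) (-(4 * H ^ 2 * B) / (1 - B) ^ 2) ∧
    (∀ s : ℝ, Real.sin (2 * H * s) = -1 → KB s = -(4 * H ^ 2 * B) / (1 - B) ^ 2) ∧
    (∃ s : ℝ, Real.sin (2 * H * s) = -1) := by
  have hc : 0 < 1 - B := by linarith
  have hval : ∀ s : ℝ, Real.sin (2 * H * s) = -1 →
      KB s = -(4 * H ^ 2 * B) / (1 - B) ^ 2 := by
    intro s hs
    rw [hK, hs]
    have h1 : 1 + B ^ 2 + 2 * B * (-1) = (1 - B) ^ 2 := by ring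
    rw [h1, div_eq_div_iff (by positivity) (by positivity)]
    ring
  have hex : ∃ s : ℝ, Real.sin (2 * H * s) = -1 := by
    refine ⟨-(Real.pi / 2) / (2 * H), ?_⟩
    have h1 : 2 * H * (-(Real.pi / 2) / (2 * H)) = -(Real.pi / 2) := by
      field_simp
    rw [h1, Real.sin_neg, Real.sin_pi_div_two]
  refine ⟨⟨?_, ?_⟩, hval, hex⟩
  · rintro _ ⟨s, rfl⟩
    rw [hK]
    obtain ⟨t, ht⟩ : ∃ t, t = Real.sin (2 * H * s) + 1 := ⟨_, rfl⟩
    have hx : Real.sin (2 * H * s) = t - 1 := by linarith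
    have ht0 : 0 ≤ t := by linarith [Real.neg_one_le_sin (2 * H * s)]
    rw [hx]
    have h1 : 1 + B ^ 2 + 2 * B * (t - 1) = (1 - B) ^ 2 + 2 * B * t := by ring
    rw [h1, div_le_div_iff₀ (by positivity) (by positivity)]
    have h2 : 0 ≤ 4 * H ^ 2 * B * ((1 - B) ^ 4 * t + (1 - B) ^ 2 * B * t ^ 2
        + 4 * B * t * (1 - B) ^ 2 + 4 * B ^ 2 * t ^ 2) := by positivity
    linarith
  · intro b hb
    obtain ⟨s, hs⟩ := hex
    rw [← hval s hs]
    exact hb ⟨s, rfl⟩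
end
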